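/- Suppose each internal edge (v,w) appears independently with probability p_{vw} ∈ [p,p̄], each crossing edge appears independently with probability q, p ≥ q, and the gap condition n(p−q) ≥ C₀·(√(n·p̄·log n) + log n) holds for a sufficiently large universal constant C₀. Then there is a universal constant C > 0 such that for every δ ∈ (0,1), with probability at least 1 − δ, every vertex v ∈ V satisfies din[v] − dout[v] ≥ n(p−q)/2 − C·(√(np·log(n/δ)) + log(n/δ)). -/

import Mathlib

open Matrix MeasureTheory
open scoped BigOperators ENNReal Classical

noncomputable section

instance measSG {n : ℕ} : MeasurableSpace (SimpleGraph (Fin n)) := ⊤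

variable {n : ℕ}

/-- Adjacency matrix of a graph, over `ℝ`. -/
def adjM (G : SimpleGraph (Fin n)) : Matrix (Fin n) (Fin n) ℝ :=
  Matrix.of fun v w => if G.Adj v w then 1 else 0

/-- Laplacian of a weighted adjacency matrix. -/
def wlap (W : Matrix (Fin n) (Fin n) ℝ) : Matrix (Fin n) (Fin n) ℝ :=
  Matrix.diagonal (fun v => ∑ w, W v w) - W

/-- Unnormalized Laplacian of a graph. -/
def lap (G : SimpleGraph (Fin n)) : Matrix (Fin n) (Fin n) ℝ := wlap (adjM G)

/-- `eig M k` is the `(k+1)`-st smallest eigenvalue (root of the characteristic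
polynomial, with multiplicity) of `M`; e.g. `eig M 1 = λ₂`. -/
def eig (M : Matrix (Fin n) (Fin n) ℝ) (k : ℕ) : ℝ :=
  (M.charpoly.roots.sort (· ≤ ·)).getD k 0

def IsUnitEigenvector (M : Matrix (Fin n) (Fin n) ℝ) (t : ℝ) (u : Fin n → ℝ) : Prop :=
  M.mulVec u = t • u ∧ ∑ v, (u v) ^ 2 = 1

/-- Membership in the first community `P₁ = {1, …, n/2}`. -/
def inP1 (n : ℕ) (v : Fin n) : Prop := (v : ℕ) < n / 2

/-- `v` and `w` are in the same community. -/
def sameSide (n : ℕ) (v w : Fin n) : Prop := inP1 n v ↔ inP1 n w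

/-- Number of neighbours of `v` in its own community. -/
def din (G : SimpleGraph (Fin n)) (v : Fin n) : ℕ :=
  Nat.card {w : Fin n // G.Adj v w ∧ sameSide n v w}

/-- Number of neighbours of `v` in the other community. -/
def dout (G : SimpleGraph (Fin n)) (v : Fin n) : ℕ :=
  Nat.card {w : Fin n // G.Adj v w ∧ ¬ sameSide n v w}

/-- Degree of `v`. -/
def deg (G : SimpleGraph (Fin n)) (v : Fin n) : ℕ :=
  Nat.card {w : Fin n // G.Adj v w}

/-- `μ` samples each pair `(v,w)`, `v < w`, as an edge independently with probability `P v w`. -/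
def IsEdgeProduct (P : Fin n → Fin n → ℝ) (μ : PMF (SimpleGraph (Fin n))) : Prop :=
  ∀ G : SimpleGraph (Fin n),
    μ G = ∏ e ∈ Finset.univ.filter (fun e : Fin n × Fin n => e.1 < e.2),
      (if G.Adj e.1 e.2 then ENNReal.ofReal (P e.1 e.2) else ENNReal.ofReal (1 - P e.1 e.2))

/-- The edge-probability matrix of a member of the `NSSBM(n,p,p̄,q)` family. -/
def NSSBMprob (n : ℕ) (p pbar q : ℝ) (P : Fin n → Fin n → ℝ) : Prop :=
  (∀ v w, P v w = P w v) ∧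
  (∀ v w : Fin n, v ≠ w → sameSide n v w → p ≤ P v w ∧ P v w ≤ pbar) ∧
  (∀ v w : Fin n, ¬ sameSide n v w → P v w = q)

/-- The ideal second eigenvector `u₂⋆`. -/
def u2star (n : ℕ) : Fin n → ℝ :=
  fun v => if inP1 n v then 1 / Real.sqrt n else -(1 / Real.sqrt n)

/-- Spectral bisection with matrix `M` recovers the planted partition of `G`. -/
def BisectCorrect (n : ℕ) (M : Matrix (Fin n) (Fin n) ℝ) : Prop :=
  ∀ u : Fin n → ℝ, IsUnitEigenvector M (eig M 1) u →
    ({v : Fin n | u v < 0} = {v : Fin n | inP1 n v} ∨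
     {v : Fin n | u v < 0} = {v : Fin n | ¬ inP1 n v})

/-- Off-diagonal part of the probability matrix: the expected adjacency matrix. -/
def offP (P : Fin n → Fin n → ℝ) : Matrix (Fin n) (Fin n) ℝ :=
  Matrix.of fun v w => if v = w then 0 else P v w

/-- Expected unnormalized Laplacian. -/
def expLap (P : Fin n → Fin n → ℝ) : Matrix (Fin n) (Fin n) ℝ := wlap (offP P)

/-- Euclidean norm. -/
def l2 (x : Fin n → ℝ) : ℝ := Real.sqrt (∑ v, (x v) ^ 2)

/-- Inner product. -/
def dotp (x y : Fin n → ℝ) : ℝ := ∑ v, x v * y v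

/-- Entrywise max (ℓ∞) norm. -/
def linf (x : Fin n → ℝ) : ℝ := ⨆ v, |x v|

/-- ℓ2 → ℓ2 operator norm of a matrix. -/
def opNorm (M : Matrix (Fin n) (Fin n) ℝ) : ℝ :=
  ‖LinearMap.toContinuousLinearMap (Matrix.toEuclideanLin M)‖

/-- The crossing edges of `μ` are independent `Bernoulli(q)`, while the internal
edges are arbitrary (possibly depending on the crossing edges). -/
def CrossingProduct (n : ℕ) (q : ℝ) (μ : PMF (SimpleGraph (Fin n))) : Prop :=
  ∃ (ν : PMF (SimpleGraph (Fin n))) (κ : SimpleGraph (Fin n) → PMF (SimpleGraph (Fin n))),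
    IsEdgeProduct (fun v w => if sameSide n v w then 0 else q) ν ∧
    (∀ H, ∀ G ∈ (κ H).support, ∀ v w, ¬ sameSide n v w → ((G.Adj v w) ↔ H.Adj v w)) ∧
    μ = ν.bind κ

/-!
The difference `din[v] - dout[v]` is the sum of independent signed edge indicators at `v`. Since
`1 + x ≤ exp x`, its moment generating function at `-s` is at most the exponential of
`∑ w, P v w * (exp (∓s) - 1)`, with sign `-` inside the community of `v` and `+` across.
For `0 ≤ s ≤ 1` the quadratic bound `exp x - 1 ≤ x + x ^ 2` makes this exponent at most
`-s * n (p - q) / 2 + s * p + s ^ 2 * n p`; the middle term appears because `v` is not its own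
neighbour. With `L = log (n / δ)` and `s = min 1 √(L / (n p))`, the Chernoff bound shows that a
deviation of `4 (√(n p L) + L)` below `n (p - q) / 2` has probability at most `exp (-L) = δ / n`
at each vertex, and a union bound over the `n` vertices concludes.
-/

section EdgePairs

variable {α : Type*} [Fintype α] [LinearOrder α]

/-- The potential edges of a graph on `α`, each represented by its increasing pair of endpoints,
as in `IsEdgeProduct`. -/
def edgePairs (α : Type*) [Fintype α] [LinearOrder α] : Finset (α × α) :=
  Finset.univ.filter fun e => e.1 < e.2

lemma mem_edgePairs {e : α × α} : e ∈ edgePairs α ↔ e.1 < e.2 := by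
  simp [edgePairs]

lemma prod_edgePairs_eq_prod_erase {M : Type*} [CommMonoid M] (v : α) {F : α → α → M}
    (hsymm : ∀ a b, F a b = F b a) (hone : ∀ a b, a ≠ v → b ≠ v → F a b = 1) :
    ∏ e ∈ edgePairs α, F e.1 e.2 = ∏ w ∈ Finset.univ.erase v, F v w := by
  refine (Finset.prod_of_injOn (fun w => (min v w, max v w)) ?_ ?_ ?_ ?_).symm
  · intro w _ w' _ h
    grind
  · intro w hw
    simpa [mem_edgePairs, eq_comm] using hw
  · rintro ⟨a, b⟩ hab hnot
    rw [mem_edgePairs] at hab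
    refine hone a b ?_ ?_
    · rintro rfl
      exact hnot ⟨b, by simpa using hab.ne', by simp [hab.le]⟩
    · rintro rfl
      exact hnot ⟨a, by simpa using hab.ne, by simp [hab.le]⟩
  · intro w _
    rcases le_total v w with h | h
    · simp [h]
    · simp [h, hsymm v w]

lemma adj_fromRel_mem_iff_of_subset_edgePairs {t : Finset (α × α)} (ht : t ⊆ edgePairs α)
    {e : α × α} (he : e ∈ edgePairs α) :
    (SimpleGraph.fromRel fun x y => (x, y) ∈ t).Adj e.1 e.2 ↔ e ∈ t := by
  have hlt : e.1 < e.2 := mem_edgePairs.1 he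
  have hswap : (e.2, e.1) ∉ t := fun h => hlt.asymm (mem_edgePairs.1 (ht h))
  simp [hlt.ne, hswap]

lemma fromRel_mem_filter_edgePairs_adj (G : SimpleGraph α) :
    (SimpleGraph.fromRel fun x y => (x, y) ∈ (edgePairs α).filter fun e => G.Adj e.1 e.2) = G := by
  ext x y
  simp only [SimpleGraph.fromRel_adj, Finset.mem_filter, mem_edgePairs, G.adj_comm y x,
    ← or_and_right, ← ne_iff_lt_or_gt]
  exact ⟨fun h => h.2.2, fun h => ⟨h.ne, h.ne, h⟩⟩

lemma sum_simpleGraph_prod_edgePairs {R : Type*} [CommSemiring R] (a b : α × α → R) :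
    ∑ G : SimpleGraph α, ∏ e ∈ edgePairs α, (if G.Adj e.1 e.2 then a e else b e) =
      ∏ e ∈ edgePairs α, (a e + b e) := by
  rw [Finset.prod_add]
  refine Finset.sum_bij' (fun G _ => (edgePairs α).filter fun e => G.Adj e.1 e.2)
    (fun t _ => SimpleGraph.fromRel fun x y => (x, y) ∈ t) (by simp) (by simp)
    (fun G _ => fromRel_mem_filter_edgePairs_adj G) (fun t ht => ?_) fun G _ => ?_
  · have ht : t ⊆ edgePairs α := Finset.mem_powerset.1 ht
    ext e
    simp only [Finset.mem_filter]
    exact ⟨fun he => (adj_fromRel_mem_iff_of_subset_edgePairs ht he.1).1 he.2,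
      fun he => ⟨ht he, (adj_fromRel_mem_iff_of_subset_edgePairs ht (ht he)).2 he⟩⟩
  · rw [Finset.prod_ite, Finset.filter_not]

end EdgePairs

instance : DiscreteMeasurableSpace (SimpleGraph (Fin n)) := ⟨fun _ => trivial⟩

namespace IsEdgeProduct

variable {P : Fin n → Fin n → ℝ} {μ : PMF (SimpleGraph (Fin n))}

lemma apply_eq_prod_edgePairs (hμ : IsEdgeProduct P μ) (G : SimpleGraph (Fin n)) :
    μ G = ∏ e ∈ edgePairs (Fin n),
      if G.Adj e.1 e.2 then ENNReal.ofReal (P e.1 e.2) else ENNReal.ofReal (1 - P e.1 e.2) := by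
  rw [hμ G]
  congr!

-- The total mass is the product of the factors `P⁺ + (1 - P)⁺`; each is at least `1`, so the
-- product can only be `1` if every factor is, which forces `0 ≤ P ≤ 1`.
lemma mem_Icc_of_lt (hμ : IsEdgeProduct P μ) {v w : Fin n} (hvw : v < w) :
    P v w ∈ Set.Icc (0 : ℝ) 1 := by
  have hprod : ∏ e ∈ edgePairs (Fin n),
      (ENNReal.ofReal (P e.1 e.2) + ENNReal.ofReal (1 - P e.1 e.2)) = 1 := by
    rw [← sum_simpleGraph_prod_edgePairs, ← μ.tsum_coe, tsum_fintype]
    exact Finset.sum_congr rfl fun G _ => (hμ.apply_eq_prod_edgePairs G).symm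
  have hone_le : ∀ e ∈ edgePairs (Fin n),
      1 ≤ ENNReal.ofReal (P e.1 e.2) + ENNReal.ofReal (1 - P e.1 e.2) := fun e _ => by
    simpa using ENNReal.ofReal_add_le (p := P e.1 e.2) (q := 1 - P e.1 e.2)
  have hone : ENNReal.ofReal (P v w) + ENNReal.ofReal (1 - P v w) = 1 :=
    (Finset.prod_eq_one_iff_of_one_le' hone_le).1 hprod (v, w) (mem_edgePairs.2 hvw)
  constructor
  · by_contra! hneg
    rw [ENNReal.ofReal_of_nonpos hneg.le, zero_add, ENNReal.ofReal_eq_one] at hone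
    linarith
  · by_contra! hgt
    rw [ENNReal.ofReal_of_nonpos (by linarith : 1 - P v w ≤ 0), add_zero,
      ENNReal.ofReal_eq_one] at hone
    linarith

lemma mem_Icc_of_ne (hμ : IsEdgeProduct P μ) (hsymm : ∀ v w, P v w = P w v) {v w : Fin n}
    (hvw : v ≠ w) : P v w ∈ Set.Icc (0 : ℝ) 1 := by
  rcases hvw.lt_or_gt with h | h
  · exact hμ.mem_Icc_of_lt h
  · exact hsymm v w ▸ hμ.mem_Icc_of_lt h

lemma toReal_apply (hμ : IsEdgeProduct P μ) (G : SimpleGraph (Fin n)) :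
    (μ G).toReal =
      ∏ e ∈ edgePairs (Fin n), if G.Adj e.1 e.2 then P e.1 e.2 else 1 - P e.1 e.2 := by
  rw [hμ.apply_eq_prod_edgePairs, ENNReal.toReal_prod]
  refine Finset.prod_congr rfl fun e he => ?_
  have hP := hμ.mem_Icc_of_lt (mem_edgePairs.1 he)
  split_ifs
  · exact ENNReal.toReal_ofReal hP.1
  · exact ENNReal.toReal_ofReal (sub_nonneg.2 hP.2)

lemma integral_prod_edgePairs (hμ : IsEdgeProduct P μ) (F : Fin n × Fin n → ℝ) :
    ∫ G, ∏ e ∈ edgePairs (Fin n), (if G.Adj e.1 e.2 then F e else 1) ∂μ.toMeasure =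
      ∏ e ∈ edgePairs (Fin n), (P e.1 e.2 * F e + (1 - P e.1 e.2)) := by
  rw [PMF.integral_eq_sum, ← sum_simpleGraph_prod_edgePairs]
  refine Finset.sum_congr rfl fun G _ => ?_
  rw [hμ.toReal_apply, smul_eq_mul, ← Finset.prod_mul_distrib]
  refine Finset.prod_congr rfl fun e _ => ?_
  split_ifs <;> ring

lemma integral_prod_neighborFinset (hμ : IsEdgeProduct P μ) (hsymm : ∀ v w, P v w = P w v)
    (v : Fin n) (f : Fin n → ℝ) :
    ∫ G, ∏ w ∈ G.neighborFinset v, f w ∂μ.toMeasure =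
      ∏ w ∈ Finset.univ.erase v, (P v w * f w + (1 - P v w)) := by
  let F (a b : Fin n) : ℝ := if a = v then f b else if b = v then f a else 1
  have hFsymm (a b : Fin n) : F a b = F b a := by grind
  have hFv (w : Fin n) : F v w = f w := if_pos rfl
  have hFone (a b : Fin n) (ha : a ≠ v) (hb : b ≠ v) : F a b = 1 := by simp [F, ha, hb]
  have hstar (G : SimpleGraph (Fin n)) : ∏ w ∈ G.neighborFinset v, f w =
      ∏ e ∈ edgePairs (Fin n), if G.Adj e.1 e.2 then F e.1 e.2 else 1 := by
    rw [prod_edgePairs_eq_prod_erase v (F := fun a b => if G.Adj a b then F a b else 1)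
      (fun a b => by simp only [G.adj_comm a b, hFsymm a b])
      (fun a b ha hb => by rw [hFone a b ha hb, ite_self])]
    simp only [hFv, SimpleGraph.neighborFinset_eq_filter, Finset.prod_filter]
    rw [Finset.prod_erase Finset.univ (by simp)]
  simp only [hstar]
  rw [hμ.integral_prod_edgePairs fun e => F e.1 e.2,
    prod_edgePairs_eq_prod_erase v (F := fun a b => P a b * F a b + (1 - P a b))
      (fun a b => by simp only [hsymm a b, hFsymm a b])
      (fun a b ha hb => by rw [hFone a b ha hb]; ring)]
  simp only [hFv]

lemma mgf_sum_neighborFinset_le (hμ : IsEdgeProduct P μ) (hsymm : ∀ v w, P v w = P w v)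
    (v : Fin n) (h : Fin n → ℝ) (t : ℝ) :
    ProbabilityTheory.mgf (fun G => ∑ w ∈ G.neighborFinset v, h w) μ.toMeasure t ≤
      Real.exp (∑ w ∈ Finset.univ.erase v, P v w * (Real.exp (t * h w) - 1)) := by
  calc ProbabilityTheory.mgf (fun G => ∑ w ∈ G.neighborFinset v, h w) μ.toMeasure t
      = ∏ w ∈ Finset.univ.erase v, (P v w * Real.exp (t * h w) + (1 - P v w)) := by
        simp only [ProbabilityTheory.mgf, Finset.mul_sum, Real.exp_sum]
        exact hμ.integral_prod_neighborFinset hsymm v _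
    _ ≤ ∏ w ∈ Finset.univ.erase v, Real.exp (P v w * (Real.exp (t * h w) - 1)) := by
        refine Finset.prod_le_prod (fun w hw => ?_) fun w _ => ?_
        · obtain ⟨hP0, hP1⟩ := hμ.mem_Icc_of_ne hsymm (Finset.ne_of_mem_erase hw).symm
          have := sub_nonneg.2 hP1
          positivity
        · linarith [Real.add_one_le_exp (P v w * (Real.exp (t * h w) - 1))]
    _ = Real.exp (∑ w ∈ Finset.univ.erase v, P v w * (Real.exp (t * h w) - 1)) :=
        (Real.exp_sum _ _).symm

end IsEdgeProduct

/-- The coefficient of the edge `vw` in `din v - dout v`: `1` for an internal edge and `-1` for a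
crossing one. -/
def sideSign (v w : Fin n) : ℝ := if sameSide n v w then 1 else -1

lemma din_sub_dout_eq_sum (G : SimpleGraph (Fin n)) (v : Fin n) :
    (din G v : ℝ) - dout G v = ∑ w ∈ G.neighborFinset v, sideSign v w := by
  simp only [din, dout, sideSign, Nat.card_eq_fintype_card, Fintype.card_subtype,
    ← Finset.filter_filter, Finset.sum_ite, SimpleGraph.neighborFinset_eq_filter,
    Finset.sum_const, nsmul_eq_mul]
  ring

lemma card_filter_inP1 : (Finset.univ.filter fun w : Fin n => inP1 n w).card = n / 2 := by
  calc (Finset.univ.filter fun w : Fin n => inP1 n w).card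
      = (Finset.univ.filter fun w : Fin n => (w : ℕ) < n / 2).card := by congr!
    _ = min n (n / 2) := Fin.card_filter_val_lt
    _ = n / 2 := min_eq_right (n.div_le_self 2)

lemma card_filter_sameSide (hn : Even n) (v : Fin n) :
    (Finset.univ.filter fun w : Fin n => sameSide n v w).card = n / 2 := by
  have hcompl := Finset.card_filter_add_card_filter_not (s := Finset.univ)
    (fun w : Fin n => inP1 n w)
  rw [card_filter_inP1, Finset.card_univ, Fintype.card_fin] at hcompl
  by_cases hv : inP1 n v
  · simpa [sameSide, hv] using card_filter_inP1
  · simp only [sameSide, hv, false_iff]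
    grind

lemma sum_ite_sameSide (hn : Even n) (v : Fin n) (x y : ℝ) :
    ∑ w, (if sameSide n v w then x else y) = n / 2 * (x + y) := by
  have hsame : ((Finset.univ.filter fun w : Fin n => sameSide n v w).card : ℝ) = n / 2 := by
    rw [card_filter_sameSide hn v, Nat.cast_div_charZero hn.two_dvd, Nat.cast_ofNat]
  have hcompl : ((Finset.univ.filter fun w : Fin n => sameSide n v w).card : ℝ) +
      (Finset.univ.filter fun w : Fin n => ¬ sameSide n v w).card = n := by
    exact_mod_cast (Finset.card_filter_add_card_filter_not _).trans (Finset.card_fin n)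
  rw [Finset.sum_ite, Finset.sum_const, Finset.sum_const, nsmul_eq_mul, nsmul_eq_mul,
    eq_sub_of_add_eq' hcompl, hsame]
  ring

/-- `P` is a symmetric matrix of edge probabilities that are at least `p` inside the communities
and at most `q` across them. It is the class of models for which the gap between `din` and `dout`
is bounded below; unlike in `NSSBMprob`, the crossing probabilities may vary. -/
structure SeparatesCommunities (p q : ℝ) (P : Fin n → Fin n → ℝ) : Prop where
  symm : ∀ v w, P v w = P w v
  le_of_sameSide : ∀ v w, v ≠ w → sameSide n v w → p ≤ P v w
  le_of_not_sameSide : ∀ v w, ¬ sameSide n v w → P v w ≤ q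

lemma NSSBMprob.separatesCommunities {p pbar q : ℝ} {P : Fin n → Fin n → ℝ}
    (hP : NSSBMprob n p pbar q P) : SeparatesCommunities p q P where
  symm := hP.1
  le_of_sameSide v w hvw h := (hP.2.1 v w hvw h).1
  le_of_not_sameSide v w h := (hP.2.2 v w h).le

lemma exp_sub_one_le_add_sq {x : ℝ} (hx : |x| ≤ 1) : Real.exp x - 1 ≤ x + x ^ 2 := by
  linarith [le_of_abs_le (Real.abs_exp_sub_one_sub_id_le hx)]

namespace SeparatesCommunities

variable {p q s : ℝ} {P : Fin n → Fin n → ℝ} {μ : PMF (SimpleGraph (Fin n))}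

lemma mul_exp_sideSign_sub_one_le (hP : SeparatesCommunities p q P) (hs : s ∈ Set.Icc (0 : ℝ) 1)
    {v w : Fin n} (hvw : v ≠ w) (hPvw : 0 ≤ P v w) :
    P v w * (Real.exp (-s * sideSign v w) - 1) ≤
      if sameSide n v w then p * (s ^ 2 - s) else q * (s ^ 2 + s) := by
  obtain ⟨hs0, hs1⟩ := hs
  have habs : |s| ≤ 1 := abs_le.2 ⟨by linarith, hs1⟩
  by_cases hside : sameSide n v w
  · calc P v w * (Real.exp (-s * sideSign v w) - 1)
        = P v w * (Real.exp (-s) - 1) := by simp [sideSign, hside]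
      _ ≤ P v w * (s ^ 2 - s) := by
          refine mul_le_mul_of_nonneg_left ?_ hPvw
          linarith [exp_sub_one_le_add_sq (x := -s) (by rwa [abs_neg])]
      _ ≤ p * (s ^ 2 - s) :=
          mul_le_mul_of_nonpos_right (hP.le_of_sameSide v w hvw hside) (by nlinarith)
      _ = _ := (if_pos hside).symm
  · calc P v w * (Real.exp (-s * sideSign v w) - 1)
        = P v w * (Real.exp s - 1) := by simp [sideSign, hside]
      _ ≤ P v w * (s ^ 2 + s) := by
          refine mul_le_mul_of_nonneg_left ?_ hPvw
          linarith [exp_sub_one_le_add_sq habs]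
      _ ≤ q * (s ^ 2 + s) := by
          gcongr
          exact hP.le_of_not_sameSide v w hside
      _ = _ := (if_neg hside).symm

lemma mgf_din_sub_dout_le (hP : SeparatesCommunities p q P) (hμ : IsEdgeProduct P μ)
    (hn : Even n) (hp : 0 ≤ p) (hqp : q ≤ p) (hs : s ∈ Set.Icc (0 : ℝ) 1) (v : Fin n) :
    ProbabilityTheory.mgf (fun G => (din G v : ℝ) - dout G v) μ.toMeasure (-s) ≤
      Real.exp (-s * (n * (p - q) / 2) + s * p + s ^ 2 * (n * p)) := by
  have hvv : sameSide n v v := Iff.rfl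
  simp only [din_sub_dout_eq_sum]
  refine (hμ.mgf_sum_neighborFinset_le hP.symm v _ _).trans (Real.exp_le_exp.2 ?_)
  calc ∑ w ∈ Finset.univ.erase v, P v w * (Real.exp (-s * sideSign v w) - 1)
      ≤ ∑ w ∈ Finset.univ.erase v,
          if sameSide n v w then p * (s ^ 2 - s) else q * (s ^ 2 + s) :=
        Finset.sum_le_sum fun w hw =>
          have hvw : v ≠ w := (Finset.ne_of_mem_erase hw).symm
          hP.mul_exp_sideSign_sub_one_le hs hvw (hμ.mem_Icc_of_ne hP.symm hvw).1
    _ = n / 2 * (p * (s ^ 2 - s) + q * (s ^ 2 + s)) - p * (s ^ 2 - s) := by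
        rw [Finset.sum_erase_eq_sub (Finset.mem_univ v), sum_ite_sameSide hn,
          if_pos hvv]
    _ = -s * (n * (p - q) / 2) + s * p + s ^ 2 * (n * ((p + q) / 2)) - s ^ 2 * p := by ring
    _ ≤ -s * (n * (p - q) / 2) + s * p + s ^ 2 * (n * ((p + p) / 2)) - 0 := by
        gcongr
        positivity
    _ = -s * (n * (p - q) / 2) + s * p + s ^ 2 * (n * p) := by ring

end SeparatesCommunities

lemma exists_chernoff_parameter {a p L : ℝ} (hpL : p ≤ 2 * L) (hL : 0 < L) :
    ∃ s ∈ Set.Icc (0 : ℝ) 1, s * p + s ^ 2 * a + L ≤ s * (4 * (√(a * L) + L)) := by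
  rcases le_or_gt a L with haL | haL
  · exact ⟨1, by simp, by linarith [Real.sqrt_nonneg (a * L)]⟩
  · have ha0 : 0 < a := hL.trans haL
    have hs0 : 0 ≤ √(L / a) := Real.sqrt_nonneg _
    have hs1 : √(L / a) ≤ 1 := Real.sqrt_le_one.2 ((div_le_one ha0).2 haL.le)
    have hsq : √(L / a) ^ 2 * a = L := by
      rw [Real.sq_sqrt (by positivity), div_mul_cancel₀ _ ha0.ne']
    have hmul : √(L / a) * √(a * L) = L := by
      rw [← Real.sqrt_mul (by positivity), ← mul_assoc, div_mul_cancel₀ _ ha0.ne',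
        Real.sqrt_mul_self hL.le]
    exact ⟨√(L / a), ⟨hs0, hs1⟩, by nlinarith⟩

lemma SeparatesCommunities.measureReal_din_sub_dout_le {p q L : ℝ} {P : Fin n → Fin n → ℝ}
    {μ : PMF (SimpleGraph (Fin n))} (hP : SeparatesCommunities p q P) (hμ : IsEdgeProduct P μ)
    (hn : Even n) (hp : 0 ≤ p) (hqp : q ≤ p) (hpL : p ≤ 2 * L) (hL : 0 < L) (v : Fin n) :
    μ.toMeasure.real
        {G | (din G v : ℝ) - dout G v ≤ n * (p - q) / 2 - 4 * (√(n * p * L) + L)} ≤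
      Real.exp (-L) := by
  obtain ⟨s, hs, hsL⟩ := exists_chernoff_parameter (a := n * p) hpL hL
  set T : ℝ := n * (p - q) / 2 - 4 * (√(n * p * L) + L) with hT
  calc μ.toMeasure.real {G | (din G v : ℝ) - dout G v ≤ T}
      ≤ Real.exp (- -s * T) *
          ProbabilityTheory.mgf (fun G => (din G v : ℝ) - dout G v) μ.toMeasure (-s) :=
        ProbabilityTheory.measure_le_le_exp_mul_mgf T (neg_nonpos.2 hs.1) .of_finite
    _ ≤ Real.exp (- -s * T) *
          Real.exp (-s * (n * (p - q) / 2) + s * p + s ^ 2 * (n * p)) := by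
        gcongr
        exact hP.mgf_din_sub_dout_le hμ hn hp hqp hs v
    _ = Real.exp (s * p + s ^ 2 * (n * p) - s * (4 * (√(n * p * L) + L))) := by
        rw [← Real.exp_add, hT]
        ring_nf
    _ ≤ Real.exp (-L) := Real.exp_le_exp.2 (by linarith)

lemma one_sub_le_measure_setOf_forall {Ω ι : Type*} [MeasurableSpace Ω] {ν : Measure Ω}
    [IsProbabilityMeasure ν] [Fintype ι] {good : ι → Ω → Prop} {ε : ℝ≥0∞}
    (hmeas : ∀ i, MeasurableSet {ω | good i ω})
    (hbad : ∀ i, ν {ω | ¬ good i ω} ≤ ε / Fintype.card ι) :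
    1 - ε ≤ ν {ω | ∀ i, good i ω} := by
  have hunion : ν (⋃ i, {ω | ¬ good i ω}) ≤ ε :=
    calc ν (⋃ i, {ω | ¬ good i ω}) ≤ ∑ i, ν {ω | ¬ good i ω} := measure_iUnion_fintype_le ν _
      _ ≤ ∑ _ : ι, ε / Fintype.card ι := Finset.sum_le_sum fun i _ => hbad i
      _ = Fintype.card ι * (ε / Fintype.card ι) := by simp
      _ ≤ ε := ENNReal.mul_div_le
  have hmeas_bad : MeasurableSet (⋃ i, {ω | ¬ good i ω}) := .iUnion fun i => (hmeas i).compl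
  have hcompl : {ω | ∀ i, good i ω} = (⋃ i, {ω | ¬ good i ω})ᶜ := by
    ext ω
    simp
  rw [hcompl, prob_compl_eq_one_sub hmeas_bad]
  exact tsub_le_tsub_left hunion 1

theorem din_minus_dout_lower_bound_general {p q δ : ℝ} {P : Fin n → Fin n → ℝ}
    {μ : PMF (SimpleGraph (Fin n))} (hn : Even n) (hp : p ∈ Set.Icc (0 : ℝ) 1) (hqp : q ≤ p)
    (hδ : 0 < δ) (hδ1 : δ < 1) (hP : SeparatesCommunities p q P) (hμ : IsEdgeProduct P μ) :
    1 - ENNReal.ofReal δ ≤ μ.toMeasure {G | ∀ v : Fin n,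
      n * (p - q) / 2 - 4 * (√(n * p * Real.log (n / δ)) + Real.log (n / δ)) ≤
        (din G v : ℝ) - dout G v} := by
  refine one_sub_le_measure_setOf_forall (fun v => .of_discrete) fun v => ?_
  have hn2 : (2 : ℝ) ≤ n := by exact_mod_cast Nat.le_of_dvd v.pos hn.two_dvd
  have hlog : 1 / 2 ≤ Real.log (n / δ) :=
    calc 1 / 2 ≤ Real.log 2 := by linarith [Real.log_two_gt_d9]
      _ ≤ Real.log (n / δ) :=
        Real.log_le_log two_pos ((le_div_iff₀ hδ).2 (by linarith))
  rw [Fintype.card_fin, ← ENNReal.ofReal_natCast n, ← ENNReal.ofReal_div_of_pos (by linarith),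
    ← ofReal_measureReal]
  refine ENNReal.ofReal_le_ofReal ?_
  calc μ.toMeasure.real {G | ¬ n * (p - q) / 2 -
          4 * (√(n * p * Real.log (n / δ)) + Real.log (n / δ)) ≤ (din G v : ℝ) - dout G v}
      ≤ μ.toMeasure.real {G | (din G v : ℝ) - dout G v ≤ n * (p - q) / 2 -
          4 * (√(n * p * Real.log (n / δ)) + Real.log (n / δ))} :=
        measureReal_mono fun G hG => (not_le.1 hG).le
    _ ≤ Real.exp (-Real.log (n / δ)) :=
        hP.measureReal_din_sub_dout_le hμ hn hp.1 hqp (by linarith [hp.2]) (by linarith) v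
    _ = δ / n := by rw [Real.exp_neg, Real.exp_log (by positivity), inv_div]

/-- **Lemma (gap between internal and crossing degrees).**
In the NSSBM setting with `p ≥ q` and the gap condition
`n(p-q) ≥ C₀(√(n p̄ log n) + log n)` for a sufficiently large universal constant `C₀`,
there is a universal constant `C > 0` such that for every `δ ∈ (0,1)`, with probability
at least `1 - δ`, every vertex `v` satisfies
`din[v] - dout[v] ≥ n(p-q)/2 - C(√(np log(n/δ)) + log(n/δ))`. -/
theorem din_minus_dout_lower_bound :
    ∃ C0 : ℝ, 0 < C0 ∧ ∃ C : ℝ, 0 < C ∧ ∀ n : ℕ, Even n →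
      ∀ p pbar q δ : ℝ, 0 ≤ q → q ≤ p → p ≤ pbar → pbar ≤ 1 → 0 < δ → δ < 1 →
      ∀ (P : Fin n → Fin n → ℝ) (μ : PMF (SimpleGraph (Fin n))),
        NSSBMprob n p pbar q P → IsEdgeProduct P μ →
        C0 * (Real.sqrt ((n : ℝ) * pbar * Real.log n) + Real.log n) ≤ (n : ℝ) * (p - q) →
        1 - ENNReal.ofReal δ ≤ μ.toMeasure {G |
          ∀ v : Fin n,
            (n : ℝ) * (p - q) / 2 -
                C * (Real.sqrt ((n : ℝ) * p * Real.log (n / δ)) + Real.log (n / δ)) ≤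
              (din G v : ℝ) - (dout G v : ℝ)} := by
  refine ⟨1, one_pos, 4, four_pos, fun n hn p pbar q δ hq hqp hpp hpb hδ hδ1 P μ hP hμ _ => ?_⟩
  exact din_minus_dout_lower_bound_general hn ⟨hq.trans hqp, hpp.trans hpb⟩ hqp hδ hδ1
    hP.separatesCommunities hμ

end
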